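/- Let a, b, c be integers with a > 0, c > 0, and suppose d := ac − b² is positive, squarefree, and d mod 8 ≠ 7. Then the binary quadratic form q(x,y) = ax² + 2bxy + cy² is represented by the sum of four squares: there exist vectors u, v ∈ ℤ⁴ with u·u = a, u·v = b, and v·v = c. -/

import Mathlib

/-- The dot product on `ℤ⁴`. -/
def dot4 (u v : Fin 4 → ℤ) : ℤ :=
  u 0 * v 0 + u 1 * v 1 + u 2 * v 2 + u 3 * v 3

/-!
For Lipschitz quaternions `q` and `r`, the real part of `q * star r` is the dot product of their
coordinates. So if `a * c - b ^ 2 = y ^ 2 + z ^ 2 + w ^ 2`, then `x = b + y i + z j + w k` has norm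
`a * c`, and any factorization `x = q * star r` into quaternions of norms `a` and `c` gives the
required vectors. Such a factorization always exists: split off a factor of norm two while `a` is
even, and divide with remainder by `a` when it is odd.

The three squares come from Legendre's theorem. Once the factors `4` are removed from
`d = a * c - b ^ 2`, Dirichlet's theorem and quadratic reciprocity give an `n` such that `-n` is a
square modulo `n * d - 1`. Then `d` is a coefficient of a positive ternary form of determinant one,
and by Hermite reduction every such form is equivalent to the sum of three squares.
-/

open scoped Quaternion NumberTheorySymbols Matrix

theorem exists_four_mul_sq_add_mul_le (x : ℤ) {y : ℤ} (hy : y ≠ 0) :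
    ∃ k : ℤ, 4 * (x + k * y) ^ 2 ≤ y ^ 2 := by
  refine ⟨-round (x / y : ℚ), ?_⟩
  have hround : |2 * (x / y - round (x / y : ℚ) : ℚ)| ≤ 1 := by
    rw [abs_mul, abs_two]
    linarith [abs_sub_round (x / y : ℚ)]
  have hy' : (y : ℚ) ≠ 0 := by exact_mod_cast hy
  qify
  calc (4 * (x + -round (x / y : ℚ) * y) ^ 2 : ℚ)
      = (2 * (x / y - round (x / y : ℚ))) ^ 2 * y ^ 2 := by field_simp; ring
    _ ≤ 1 * y ^ 2 := by gcongr; exact (sq_le_one_iff_abs_le_one _).2 hround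
    _ = y ^ 2 := one_mul _

/-! ### Reduction of ternary forms of determinant one -/

/-- `M` is the Gram matrix of the columns of a square integer matrix, that is, the quadratic form
with matrix `M` arises from a sum of squares by an integral linear substitution. -/
def IsIntegralGram {n : Type*} [Fintype n] (M : Matrix n n ℤ) : Prop :=
  ∃ U : Matrix n n ℤ, Uᵀ * U = M

theorem IsIntegralGram.of_transpose_mul_mul {n : Type*} [Fintype n] [DecidableEq n]
    {M P : Matrix n n ℤ} (hP : IsUnit P.det) (h : IsIntegralGram (Pᵀ * M * P)) :
    IsIntegralGram M := by
  obtain ⟨U, hU⟩ := h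
  have hP' : IsUnit Pᵀ.det := by rwa [Matrix.det_transpose]
  refine ⟨U * P⁻¹, ?_⟩
  calc (U * P⁻¹)ᵀ * (U * P⁻¹)
      = Pᵀ⁻¹ * (Uᵀ * U) * P⁻¹ := by
        simp only [Matrix.transpose_mul, Matrix.transpose_nonsing_inv, Matrix.mul_assoc]
    _ = Pᵀ⁻¹ * (Pᵀ * (M * P)) * P⁻¹ := by rw [hU, Matrix.mul_assoc Pᵀ]
    _ = M := by
        rw [Matrix.nonsing_inv_mul_cancel_left _ _ hP', Matrix.mul_nonsing_inv_cancel_right _ _ hP]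

/-- The symmetric matrix of the form `a x² + b y² + c z² + 2 r x y + 2 s x z + 2 t y z`. -/
def ternaryMatrix (a b c r s t : ℤ) : Matrix (Fin 3) (Fin 3) ℤ :=
  !![a, r, s; r, b, t; s, t, c]

theorem det_ternaryMatrix (a b c r s t : ℤ) : (ternaryMatrix a b c r s t).det =
    a * b * c + 2 * r * s * t - a * t ^ 2 - b * s ^ 2 - c * r ^ 2 := by
  simp only [ternaryMatrix, Matrix.det_fin_three, Matrix.of_apply, Matrix.cons_val',
    Matrix.cons_val]
  ring

theorem isIntegralGram_of_shear_swap_left {a b c r s t : ℤ} (k : ℤ)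
    (h : IsIntegralGram
      (ternaryMatrix (b + 2 * k * r + k ^ 2 * a) a c (r + k * a) (t + k * s) s)) :
    IsIntegralGram (ternaryMatrix a b c r s t) := by
  refine .of_transpose_mul_mul (P := !![k, 1, 0; 1, 0, 0; 0, 0, 1])
    (by simp [Matrix.det_fin_three]) ?_
  convert h using 1
  ext i j
  fin_cases i <;> fin_cases j <;>
    simp [ternaryMatrix, Matrix.mul_apply, Fin.sum_univ_three] <;> ring

theorem isIntegralGram_of_shear_swap_right {a b c r s t : ℤ} (k : ℤ)
    (h : IsIntegralGram
      (ternaryMatrix a (c + 2 * k * t + k ^ 2 * b) b (s + k * r) r (t + k * b))) :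
    IsIntegralGram (ternaryMatrix a b c r s t) := by
  refine .of_transpose_mul_mul (P := !![1, 0, 0; 0, k, 1; 0, 1, 0])
    (by simp [Matrix.det_fin_three]) ?_
  convert h using 1
  ext i j
  fin_cases i <;> fin_cases j <;>
    simp [ternaryMatrix, Matrix.mul_apply, Fin.sum_univ_three] <;> ring

theorem three_mul_sq_le_of_forall_le {a b r : ℤ} (ha : 0 < a)
    (hmin : ∀ k : ℤ, a ≤ b + 2 * k * r + k ^ 2 * a) : 3 * a ^ 2 ≤ 4 * (a * b - r ^ 2) := by
  obtain ⟨k, hk⟩ := exists_four_mul_sq_add_mul_le r ha.ne'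
  have h := mul_le_mul_of_nonneg_left (hmin k) ha.le
  linarith

theorem isIntegralGram_of_leading_minors_eq_one {b c r s t : ℤ} (hb : b - r ^ 2 = 1)
    (hdet : (ternaryMatrix 1 b c r s t).det = 1) :
    IsIntegralGram (ternaryMatrix 1 b c r s t) := by
  rw [det_ternaryMatrix] at hdet
  obtain rfl : b = r ^ 2 + 1 := by linarith
  obtain rfl : c = s ^ 2 + (t - r * s) ^ 2 + 1 := by linarith
  refine ⟨!![1, r, s; 0, 1, t - r * s; 0, 0, 1], ?_⟩
  ext i j
  fin_cases i <;> fin_cases j <;>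
    simp [ternaryMatrix, Matrix.mul_apply, Fin.sum_univ_three] <;> ring

-- The minors `a b - r²`, `a t - r s`, `a c - s²` are the coefficients of a binary form of
-- determinant `a`. If neither this form nor `(a, r, b)` can be shortened, then `a = a b - r² = 1`.
theorem minor_mul_minor_sub_sq_eq {a b c r s t : ℤ} (hdet : (ternaryMatrix a b c r s t).det = 1) :
    (a * b - r ^ 2) * (a * c - s ^ 2) - (a * t - r * s) ^ 2 = a := by
  rw [det_ternaryMatrix] at hdet
  linear_combination a * hdet

theorem isIntegralGram_of_forall_le {a b c r s t : ℤ} (ha : 0 < a) (hA : 0 < a * b - r ^ 2)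
    (hdet : (ternaryMatrix a b c r s t).det = 1)
    (hmin : ∀ k, a ≤ b + 2 * k * r + k ^ 2 * a)
    (hmin' : ∀ k, a * b - r ^ 2 ≤
      (a * c - s ^ 2) + 2 * k * (a * t - r * s) + k ^ 2 * (a * b - r ^ 2)) :
    IsIntegralGram (ternaryMatrix a b c r s t) := by
  have h₁ := three_mul_sq_le_of_forall_le ha hmin
  have h₂ := three_mul_sq_le_of_forall_le hA hmin'
  rw [minor_mul_minor_sub_sq_eq hdet] at h₂
  have ha1 : a = 1 := by nlinarith
  have hA1 : a * b - r ^ 2 = 1 := by nlinarith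
  subst ha1
  exact isIntegralGram_of_leading_minors_eq_one (by linarith) hdet

theorem isIntegralGram_of_det_eq_one {a b c r s t : ℤ} (ha : 0 < a) (hA : 0 < a * b - r ^ 2)
    (hdet : (ternaryMatrix a b c r s t).det = 1) :
    IsIntegralGram (ternaryMatrix a b c r s t) := by
  have hdet' := hdet
  rw [det_ternaryMatrix] at hdet'
  have hminors := minor_mul_minor_sub_sq_eq hdet
  by_cases hmin : ∀ k, a ≤ b + 2 * k * r + k ^ 2 * a
  · by_cases hmin' : ∀ k, a * b - r ^ 2 ≤
        (a * c - s ^ 2) + 2 * k * (a * t - r * s) + k ^ 2 * (a * b - r ^ 2)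
    · exact isIntegralGram_of_forall_le ha hA hdet hmin hmin'
    · push Not at hmin'
      obtain ⟨k, hk⟩ := hmin'
      have hminor : a * (c + 2 * k * t + k ^ 2 * b) - (s + k * r) ^ 2 =
        (a * c - s ^ 2) + 2 * k * (a * t - r * s) + k ^ 2 * (a * b - r ^ 2) := by ring
      have hpos : 0 < a * (c + 2 * k * t + k ^ 2 * b) - (s + k * r) ^ 2 := by
        refine pos_of_mul_pos_right (a := a * b - r ^ 2) ?_ hA.le
        rw [hminor]
        nlinarith [sq_nonneg (a * t - r * s + k * (a * b - r ^ 2))]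
      apply isIntegralGram_of_shear_swap_right k
      apply isIntegralGram_of_det_eq_one ha hpos
      rw [det_ternaryMatrix]
      linear_combination hdet'
  · push Not at hmin
    obtain ⟨k, hk⟩ := hmin
    have hpos : 0 < b + 2 * k * r + k ^ 2 * a := by
      refine pos_of_mul_pos_right (a := a) ?_ ha.le
      nlinarith [sq_nonneg (r + k * a)]
    apply isIntegralGram_of_shear_swap_left k
    apply isIntegralGram_of_det_eq_one hpos (by linarith)
    rw [det_ternaryMatrix]
    linear_combination hdet'
termination_by (a.toNat, (a * b - r ^ 2).toNat)
decreasing_by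
  · exact Prod.Lex.right _ ((Int.toNat_lt_toNat hA).2 (by linarith))
  · exact Prod.Lex.left _ _ ((Int.toNat_lt_toNat ha).2 hk)

/-! ### Legendre's three-square theorem -/

/-- `n` is a sum of three squares of integers. -/
def IsSumOfThreeSquares (n : ℤ) : Prop :=
  ∃ x y z : ℤ, x ^ 2 + y ^ 2 + z ^ 2 = n

theorem IsSumOfThreeSquares.sq_mul {n : ℤ} (h : IsSumOfThreeSquares n) (m : ℤ) :
    IsSumOfThreeSquares (m ^ 2 * n) := by
  obtain ⟨x, y, z, rfl⟩ := h
  exact ⟨m * x, m * y, m * z, by ring⟩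

theorem IsIntegralGram.isSumOfThreeSquares {M : Matrix (Fin 3) (Fin 3) ℤ} (hM : IsIntegralGram M)
    (i : Fin 3) : IsSumOfThreeSquares (M i i) := by
  obtain ⟨U, rfl⟩ := hM
  refine ⟨U 0 i, U 1 i, U 2 i, ?_⟩
  simp only [Matrix.mul_apply, Matrix.transpose_apply, Fin.sum_univ_three, sq]

theorem isSumOfThreeSquares_of_isSquare_neg {b d q : ℕ} (hbd : b * d = q + 1)
    (hb : IsSquare ((-b : ℤ) : ZMod q)) : IsSumOfThreeSquares d := by
  obtain ⟨y, hy⟩ := hb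
  obtain ⟨x, rfl⟩ := ZMod.intCast_surjective y
  obtain ⟨a, ha⟩ : (q : ℤ) ∣ x ^ 2 + b := by
    rw [← ZMod.intCast_zmod_eq_zero_iff_dvd]
    push_cast at hy ⊢
    rw [sq, ← hy, neg_add_cancel]
  have hb0 : (0 : ℤ) < b := by
    exact_mod_cast Nat.pos_of_ne_zero (by rintro rfl; omega)
  have hbd' : (b * d : ℤ) = q + 1 := by exact_mod_cast hbd
  have hqa : 0 < (q : ℤ) * a := by rw [← ha]; positivity
  have ha0 : 0 < a := pos_of_mul_pos_right hqa (by positivity)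
  have hGram : IsIntegralGram (ternaryMatrix a q d x 1 0) := by
    refine isIntegralGram_of_det_eq_one ha0 (by linarith) ?_
    rw [det_ternaryMatrix]
    linear_combination hbd' - d * ha
  exact hGram.isSumOfThreeSquares 2

theorem isSquare_intCast_zmod_mul {m n : ℕ} (hmn : m.Coprime n) {a : ℤ}
    (hm : IsSquare (a : ZMod m)) (hn : IsSquare (a : ZMod n)) : IsSquare (a : ZMod (m * n)) := by
  obtain ⟨x, hx⟩ := hm
  obtain ⟨y, hy⟩ := hn
  have h : IsSquare (a : ZMod m × ZMod n) := ⟨(x, y), Prod.ext hx hy⟩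
  simpa only [map_intCast] using h.map (ZMod.chineseRemainder hmn).symm

theorem jacobiSym_neg_left_of_mod_four {p b : ℕ} (hp : Odd p) (hb : Odd b)
    (h : p % 4 = 1 ∨ b % 4 = 3) : J(-b | p) = J(p | b) := by
  rw [jacobiSym.neg _ hp]
  rcases Nat.odd_mod_four_iff.1 (Nat.odd_iff.1 hp) with hp4 | hp4
  · rw [ZMod.χ₄_nat_one_mod_four hp4, one_mul,
      jacobiSym.quadratic_reciprocity_one_mod_four' hb hp4]
  · rw [ZMod.χ₄_nat_three_mod_four hp4,
      jacobiSym.quadratic_reciprocity_three_mod_four (by omega) hp4, neg_one_mul, neg_neg]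

theorem jacobiSym_eq_one_of_mul_add_one_eq {k p b d : ℕ} (h : k * p + 1 = b * d)
    (hk : J(-k | b) = 1) : J(p | b) = 1 := by
  have hmod : (-k * p : ℤ) % b = 1 % b := by
    refine Int.modEq_iff_dvd.2 ⟨d, ?_⟩
    have : (k * p + 1 : ℤ) = b * d := by exact_mod_cast h
    linear_combination this
  calc J(p | b) = J(-k | b) * J(p | b) := by rw [hk, one_mul]
    _ = J(-k * p | b) := (jacobiSym.mul_left ..).symm
    _ = J(1 | b) := jacobiSym.mod_left' hmod
    _ = 1 := jacobiSym.one_left b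

theorem isSumOfThreeSquares_of_prime {k p b d : ℕ} (hp : p.Prime) (hp2 : Odd p) (hb : Odd b)
    (hkp : k.Coprime p) (h : k * p + 1 = b * d) (h4 : p % 4 = 1 ∨ b % 4 = 3)
    (hJ : J(-k | b) = 1) (hsq : IsSquare ((-b : ℤ) : ZMod k)) : IsSumOfThreeSquares d := by
  have := Fact.mk hp
  have hJp : J(-b | p) = 1 := by
    rw [jacobiSym_neg_left_of_mod_four hp2 hb h4, jacobiSym_eq_one_of_mul_add_one_eq h hJ]
  exact isSumOfThreeSquares_of_isSquare_neg h.symm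
    (isSquare_intCast_zmod_mul hkp hsq (ZMod.isSquare_of_jacobiSym_eq_one hJp))

theorem exists_prime_gt_eq_add_mul (N : ℕ) {e m : ℕ} (hm : m ≠ 0) (h : e.Coprime m) :
    ∃ j, N < e + m * j ∧ (e + m * j).Prime := by
  obtain ⟨p, hpN, hp, hmod⟩ := Nat.forall_exists_prime_gt_and_modEq (N + e) hm h
  obtain ⟨j, hj⟩ := (Nat.modEq_iff_dvd' (by omega)).1 hmod.symm
  obtain rfl : p = e + m * j := by omega
  exact ⟨j, by omega, hp⟩

theorem isSumOfThreeSquares_of_mul_add_one_eq {k c d e : ℕ} (hk : k ≠ 0) (h : k * e + 1 = c * d)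
    (he : Odd e) (hc : Odd c) (h4 : e % 4 = 1 ∨ c % 4 = 3) (hJ : J(-k | c) = 1)
    (hsq : IsSquare ((-c : ℤ) : ZMod k)) : IsSumOfThreeSquares d := by
  have hd0 : d ≠ 0 := by rintro rfl; omega
  have hed : e.Coprime d := by
    refine .coprime_mul_left_right (k := c) ?_
    rw [← h]
    simp
  have he4 : e.Coprime 4 := (Nat.coprime_two_right.2 he).pow_right 2
  -- Each `j` preserves the relation: `k * (e + 4 * d * j) + 1 = (c + 4 * k * j) * d`.
  obtain ⟨j, hkp, hp⟩ := exists_prime_gt_eq_add_mul k (m := 4 * d) (by omega)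
    (he4.mul_right hed)
  have hb : Odd (c + 4 * k * j) := hc.add_even ⟨2 * k * j, by ring⟩
  have hp4 : (e + 4 * d * j) % 4 = e % 4 := by rw [mul_assoc, Nat.add_mul_mod_self_left]
  have hb4 : (c + 4 * k * j) % 4 = c % 4 := by rw [mul_assoc, Nat.add_mul_mod_self_left]
  refine isSumOfThreeSquares_of_prime (k := k) (b := c + 4 * k * j) hp
    (he.add_even ⟨2 * d * j, by ring⟩) hb
    (Nat.coprime_of_lt_prime hk hkp hp).symm ?_ (by rwa [hp4, hb4]) ?_ ?_
  · linear_combination h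
  · rw [jacobiSym.mod_right _ hb, ← hJ, jacobiSym.mod_right _ hc]
    simp
  · simpa using hsq

theorem isSumOfThreeSquares_of_mod_four_ne_zero {d : ℕ} (h4 : d % 4 ≠ 0) (h7 : d % 8 ≠ 7) :
    IsSumOfThreeSquares d := by
  have hcases : d % 4 = 2 ∨ d % 8 = 3 ∨ d % 4 = 1 := by omega
  rcases hcases with h | h | h
  · exact isSumOfThreeSquares_of_mul_add_one_eq (k := 1) (c := 1) (e := d - 1) one_ne_zero
      (by omega) (by grind) odd_one (by omega) (by simp) ⟨0, Subsingleton.elim _ _⟩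
  · exact isSumOfThreeSquares_of_mul_add_one_eq (k := 2) (c := 1) (e := (d - 1) / 2) two_ne_zero
      (by omega) (by grind) odd_one (by omega) (by simp) (by decide)
  · exact isSumOfThreeSquares_of_mul_add_one_eq (k := 2) (c := 3) (e := (3 * d - 1) / 2)
      two_ne_zero (by omega) (by grind) (by decide) (by omega) (by norm_num) (by decide)

theorem isSumOfThreeSquares_of_forall_ne {d : ℕ} (h : ∀ k m : ℕ, d ≠ 4 ^ k * (8 * m + 7)) :
    IsSumOfThreeSquares d := by
  induction d using Nat.strong_induction_on with
  | _ d ih =>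
  by_cases h4 : d % 4 = 0
  · obtain ⟨d, rfl⟩ := Nat.dvd_of_mod_eq_zero h4
    rcases d.eq_zero_or_pos with rfl | hd
    · exact ⟨0, 0, 0, by simp⟩
    have hd' : IsSumOfThreeSquares d := ih d (by omega) fun k m hkm ↦
      h (k + 1) m (by rw [hkm, pow_succ']; ring)
    simpa using hd'.sq_mul 2
  · exact isSumOfThreeSquares_of_mod_four_ne_zero h4 fun h7 ↦ h 0 (d / 8) (by omega)

/-! ### Factorization of Lipschitz quaternions -/

section Quaternions

open Quaternion

theorem dot4_equivTuple (q r : ℍ[ℤ]) :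
    dot4 (equivTuple ℤ q) (equivTuple ℤ r) = (q * star r).re := by
  simp [dot4, equivTuple_apply]

theorem exists_re_imI_imJ_imK_eq (a b c d : ℤ) :
    ∃ q : ℍ[ℤ], q.re = a ∧ q.imI = b ∧ q.imJ = c ∧ q.imK = d :=
  ⟨⟨a, b, c, d⟩, rfl, rfl, rfl, rfl⟩

theorem exists_normSq_eq_natCast (n : ℕ) : ∃ q : ℍ[ℤ], normSq q = n := by
  obtain ⟨a, b, c, d, rfl⟩ := Nat.sum_four_squares n
  obtain ⟨q, ha, hb, hc, hd⟩ := exists_re_imI_imJ_imK_eq a b c d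
  exact ⟨q, by rw [normSq_def', ha, hb, hc, hd]; push_cast; rfl⟩

theorem exists_eq_mul_normSq_eq_two {x : ℍ[ℤ]} (hx : Even (normSq x)) :
    ∃ p y : ℍ[ℤ], x = p * y ∧ normSq p = 2 := by
  have hparity : Even (x.re + x.imI + x.imJ + x.imK) := by
    rw [normSq_def'] at hx
    simpa [Int.even_add, Int.even_pow] using hx
  have hpairing : Even (x.re + x.imI) ∧ Even (x.imJ + x.imK) ∨
      Even (x.re + x.imJ) ∧ Even (x.imI + x.imK) ∨
      Even (x.re + x.imK) ∧ Even (x.imI + x.imJ) := by grind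
  rcases hpairing with ⟨⟨s, hs⟩, ⟨t, ht⟩⟩ | ⟨⟨s, hs⟩, ⟨t, ht⟩⟩ | ⟨⟨s, hs⟩, ⟨t, ht⟩⟩
  · obtain ⟨p, hp₀, hp₁, hp₂, hp₃⟩ := exists_re_imI_imJ_imK_eq 1 1 0 0
    obtain ⟨y, hy₀, hy₁, hy₂, hy₃⟩ :=
      exists_re_imI_imJ_imK_eq s (s - x.re) t (t - x.imJ)
    refine ⟨p, y, ?_, by rw [normSq_def', hp₀, hp₁, hp₂, hp₃]; norm_num⟩
    ext <;> simp only [re_mul, imI_mul, imJ_mul, imK_mul, *] <;> linarith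
  · obtain ⟨p, hp₀, hp₁, hp₂, hp₃⟩ := exists_re_imI_imJ_imK_eq 1 0 1 0
    obtain ⟨y, hy₀, hy₁, hy₂, hy₃⟩ :=
      exists_re_imI_imJ_imK_eq s (x.imI - t) (s - x.re) t
    refine ⟨p, y, ?_, by rw [normSq_def', hp₀, hp₁, hp₂, hp₃]; norm_num⟩
    ext <;> simp only [re_mul, imI_mul, imJ_mul, imK_mul, *] <;> linarith
  · obtain ⟨p, hp₀, hp₁, hp₂, hp₃⟩ := exists_re_imI_imJ_imK_eq 1 0 0 1
    obtain ⟨y, hy₀, hy₁, hy₂, hy₃⟩ :=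
      exists_re_imI_imJ_imK_eq s t (t - x.imI) (s - x.re)
    refine ⟨p, y, ?_, by rw [normSq_def', hp₀, hp₁, hp₂, hp₃]; norm_num⟩
    ext <;> simp only [re_mul, imI_mul, imJ_mul, imK_mul, *] <;> linarith

theorem exists_normSq_sub_natCast_mul_lt (x : ℍ[ℤ]) {m : ℕ} (hm : Odd m) :
    ∃ y : ℍ[ℤ], normSq (x - (m : ℍ[ℤ]) * y) < (m : ℤ) ^ 2 := by
  have hround (t : ℤ) : ∃ k : ℤ, 4 * (t - m * k) ^ 2 < (m : ℤ) ^ 2 := by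
    obtain ⟨k, hk⟩ := exists_four_mul_sq_add_mul_le t (y := m) (by exact_mod_cast hm.pos.ne')
    refine ⟨-k, lt_of_le_of_ne (by linarith) fun h ↦ ?_⟩
    have hodd : Odd ((m : ℤ) ^ 2) := by exact_mod_cast hm.pow
    rw [← h] at hodd
    exact Int.not_even_iff_odd.2 hodd (by simp [Int.even_iff])
  choose k hk using hround
  obtain ⟨y, hy₀, hy₁, hy₂, hy₃⟩ :=
    exists_re_imI_imJ_imK_eq (k x.re) (k x.imI) (k x.imJ) (k x.imK)
  have hnorm : normSq (x - (m : ℍ[ℤ]) * y) = (x.re - m * k x.re) ^ 2 + (x.imI - m * k x.imI) ^ 2 +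
      (x.imJ - m * k x.imJ) ^ 2 + (x.imK - m * k x.imK) ^ 2 := by
    rw [normSq_def']
    simp [hy₀, hy₁, hy₂, hy₃]
  exact ⟨y, by linarith [hk x.re, hk x.imI, hk x.imJ, hk x.imK]⟩

theorem natCast_dvd_normSq_sub_natCast_mul {m : ℕ} {x : ℍ[ℤ]} (h : (m : ℤ) ∣ normSq x)
    (y : ℍ[ℤ]) : (m : ℤ) ∣ normSq (x - (m : ℍ[ℤ]) * y) := by
  have hnorm : normSq (m : ℍ[ℤ]) = (m : ℤ) ^ 2 := normSq_natCast m
  have hre : (x * star (-((m : ℍ[ℤ]) * y))).re = -(m * (x * star y).re) := by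
    rw [star_neg, star_mul, star_natCast, mul_neg, re_neg, ← mul_assoc, ← Nat.cast_comm,
      ← nsmul_eq_mul, re_smul, nsmul_eq_mul]
  obtain ⟨n, hn⟩ := h
  refine ⟨n + m * normSq y - 2 * (x * star y).re, ?_⟩
  rw [sub_eq_add_neg, normSq_add, normSq_neg, map_mul, hn, hnorm, hre]
  ring

theorem exists_eq_mul_of_normSq_eq_mul {m n : ℕ} {x : ℍ[ℤ]} (hx : normSq x = m * n) :
    ∃ q r : ℍ[ℤ], x = q * r ∧ normSq q = m ∧ normSq r = n := by
  induction m using Nat.strong_induction_on generalizing n x with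
  | _ m ih =>
  rcases m.eq_zero_or_pos with rfl | hm0
  · obtain ⟨r, hr⟩ := exists_normSq_eq_natCast n
    exact ⟨0, r, by simpa using hx, by simp, hr⟩
  rcases m.even_or_odd with ⟨k, rfl⟩ | hm
  · have heven : Even (normSq x) := ⟨k * n, by rw [hx]; push_cast; ring⟩
    obtain ⟨p, y, rfl, hp⟩ := exists_eq_mul_normSq_eq_two heven
    rw [map_mul, hp] at hx
    push_cast at hx
    obtain ⟨q, r, rfl, hq, hr⟩ := ih k (by omega) (x := y) (n := n) (by linarith)
    refine ⟨p * q, r, (mul_assoc ..).symm, ?_, hr⟩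
    rw [map_mul, hp, hq]
    push_cast
    ring
  have hm' : (0 : ℤ) < m := by exact_mod_cast hm0
  obtain ⟨y, hlt⟩ := exists_normSq_sub_natCast_mul_lt x hm
  obtain ⟨e, he⟩ := natCast_dvd_normSq_sub_natCast_mul ⟨n, hx⟩ y
  lift e to ℕ using nonneg_of_mul_nonneg_right (he ▸ normSq_nonneg) hm'
  have hem : e < m := by
    rw [he, sq] at hlt
    exact_mod_cast lt_of_mul_lt_mul_left hlt hm'.le
  obtain ⟨r, q, hrq, -, hq⟩ := ih e hem (x := star (x - (m : ℍ[ℤ]) * y)) (n := m)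
    (by rw [normSq_star, he, mul_comm])
  have hx' : x = star q * (star r + q * y) := by
    rw [mul_add, ← mul_assoc, star_mul_self, hq, coe_natCast, ← star_mul, ← hrq, star_star,
      sub_add_cancel]
  have hq' : normSq (star q) = m := by rw [normSq_star, hq]
  refine ⟨star q, star r + q * y, hx', hq', mul_left_cancel₀ hm'.ne' ?_⟩
  rw [← hx, ← hq', ← map_mul, ← hx']

theorem exists_dot4_eq_of_isSumOfThreeSquares {a b c : ℤ} (ha : 0 ≤ a) (hc : 0 ≤ c)
    (h : IsSumOfThreeSquares (a * c - b ^ 2)) :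
    ∃ u v : Fin 4 → ℤ, dot4 u u = a ∧ dot4 u v = b ∧ dot4 v v = c := by
  lift a to ℕ using ha
  lift c to ℕ using hc
  obtain ⟨y, z, w, hyzw⟩ := h
  obtain ⟨x, hre, hi, hj, hk⟩ := exists_re_imI_imJ_imK_eq b y z w
  have hx : normSq x = a * c := by
    rw [normSq_def', hre, hi, hj, hk]
    linarith
  obtain ⟨q, r, rfl, hq, hr⟩ := exists_eq_mul_of_normSq_eq_mul hx
  refine ⟨equivTuple ℤ q, equivTuple ℤ (star r), ?_, ?_, ?_⟩
  · rw [dot4_equivTuple, ← normSq_def, hq]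
  · rw [dot4_equivTuple, star_star, hre]
  · rw [dot4_equivTuple, ← normSq_def, normSq_star, hr]

end Quaternions

theorem ne_four_pow_mul_of_squarefree {d : ℤ} (hd : Squarefree d) (h7 : d % 8 ≠ 7) (k m : ℕ) :
    d ≠ 4 ^ k * (8 * m + 7) := by
  rintro rfl
  rcases k.eq_zero_or_pos with rfl | hk
  · omega
  · have hdvd : (2 * 2 : ℤ) ∣ 4 ^ k * (8 * m + 7) := (dvd_pow_self 4 hk.ne').mul_right _
    exact absurd (hd 2 hdvd) (by decide)

theorem binary_form_represented_by_four_squares_general (a b c : ℤ)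
    (ha : 0 ≤ a) (hc : 0 ≤ c) (hd : 0 ≤ a * c - b ^ 2)
    (h : ∀ k m : ℕ, a * c - b ^ 2 ≠ 4 ^ k * (8 * m + 7)) :
    ∃ u v : Fin 4 → ℤ, dot4 u u = a ∧ dot4 u v = b ∧ dot4 v v = c := by
  apply exists_dot4_eq_of_isSumOfThreeSquares ha hc
  lift a * c - b ^ 2 to ℕ using hd with d
  exact isSumOfThreeSquares_of_forall_ne fun k m ↦ by exact_mod_cast h k m

/-- if `a, c > 0` and `d = ac − b²` is positive, squarefree and
`d mod 8 ≠ 7`, then the binary quadratic form `ax² + 2bxy + cy²` is represented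
by the sum of four squares: there are `u, v ∈ ℤ⁴` with Gram matrix
`[[a, b], [b, c]]`. -/
theorem binary_form_represented_by_four_squares (a b c : ℤ)
    (ha : 0 < a) (hc : 0 < c) (hd : 0 < a * c - b ^ 2)
    (hsq : Squarefree (a * c - b ^ 2)) (h7 : (a * c - b ^ 2) % 8 ≠ 7) :
    ∃ u v : Fin 4 → ℤ, dot4 u u = a ∧ dot4 u v = b ∧ dot4 v v = c := by
  exact binary_form_represented_by_four_squares_general a b c ha.le hc.le hd.le
    (ne_four_pow_mul_of_squarefree hsq h7)
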